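/- arXiv:2104.07466 — 9 statements merged into one kernel-verified Lean document; each statement's English description precedes it below -/
import Mathlib

section
/- Let P = (V, E, ⟨V₁, V_R⟩) be an MDP and let C ⊆ V be a strongly connected set. Let U = { v ∈ C ∩ V_R : Out(v) ∩ (V \ C) ≠ ∅ } be the set of random vertices in C that have an edge leaving C, and let Z = Attr_R^P(U) ∩ C. Then for every nontrivial end-component X of P with X ⊆ C we have Z ∩ X = ∅. -/
/-- A path from `u` to `w` using only edges whose endpoints lie in `U`. -/
def PathIn {V : Type*} (E : V → V → Prop) (U : Set V) : V → V → Prop :=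
  Relation.ReflTransGen (fun a b => a ∈ U ∧ b ∈ U ∧ E a b)

/-- `U` is strongly connected: any vertex of `U` reaches any other within `U`. -/
def StronglyConnected {V : Type*} (E : V → V → Prop) (U : Set V) : Prop :=
  ∀ u ∈ U, ∀ w ∈ U, PathIn E U u w

/-- `U` is an end-component of the MDP with edges `E` and random vertices `VR`. -/
def IsEC {V : Type*} (E : V → V → Prop) (VR U : Set V) : Prop :=
  StronglyConnected E U ∧ ∀ u ∈ U ∩ VR, ∀ w, E u w → w ∈ U

/-- A nontrivial end-component: an EC with at least 2 vertices. -/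
def IsNontrivialEC {V : Type*} (E : V → V → Prop) (VR U : Set V) : Prop :=
  IsEC E VR U ∧ 2 ≤ U.ncard

/-- A maximal end-component: a nontrivial EC maximal w.r.t. inclusion among nontrivial ECs. -/
def IsMEC {V : Type*} (E : V → V → Prop) (VR U : Set V) : Prop :=
  IsNontrivialEC E VR U ∧ ∀ U', IsNontrivialEC E VR U' → U ⊆ U' → U' = U

/-- The random attractor of `T` in the sub-MDP of `(E, VR)` induced by the vertex
set `S`: the least set containing `T`, closed under adding random vertices of the
sub-MDP with some edge into it, and player-1 vertices of the sub-MDP all of whose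
outgoing edges (in the sub-MDP) lead into it.  (The full MDP is `S = Set.univ`.) -/
inductive AttrR {V : Type*} (S : Set V) (E : V → V → Prop) (VR T : Set V) : V → Prop
  | base {v : V} : v ∈ T → AttrR S E VR T v
  | rand {v w : V} : v ∈ S → v ∈ VR → w ∈ S → E v w → AttrR S E VR T w →
      AttrR S E VR T v
  | play {v : V} : v ∈ S → v ∉ VR → (∀ w ∈ S, E v w → AttrR S E VR T w) →
      AttrR S E VR T v

/-- Let `C` be a strongly connected set, `U` the set of random vertices of `C` with an
edge leaving `C`, and `Z = Attr_R(U) ∩ C` (random attractor in the full MDP).  Then `Z`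
meets no nontrivial end-component contained in `C`. -/
theorem attractor_of_outgoing_random_misses_ECs {V : Type*} [Fintype V]
    (E : V → V → Prop) (VR : Set V) (hNoSelf : ∀ v : V, ¬ E v v)
    (C : Set V) (hC : StronglyConnected E C)
    (U : Set V) (hU : U = {v | v ∈ C ∩ VR ∧ ∃ w, E v w ∧ w ∉ C})
    (Z : Set V) (hZ : Z = {v | AttrR Set.univ E VR U v} ∩ C)
    (X : Set V) (hX : IsNontrivialEC E VR X) (hXC : X ⊆ C) :
    Z ∩ X = ∅ := by
  have key : ∀ v, AttrR Set.univ E VR U v → v ∉ X := by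
    intro v hv
    induction hv with
    | base h =>
      intro hx
      rw [hU] at h
      obtain ⟨⟨_, hr⟩, w, hw, hwC⟩ := h
      exact hwC (hXC (hX.1.2 _ ⟨hx, hr⟩ w hw))
    | rand _ hr _ he _ ih =>
      intro hx
      exact ih (hX.1.2 _ ⟨hx, hr⟩ _ he)
    | @play v _ _ _ ih =>
      intro hx
      obtain ⟨y, hy, hne⟩ := Set.exists_ne_of_one_lt_ncard (lt_of_lt_of_le one_lt_two hX.2) v
      have hp := hX.1.1 v hx y hy
      rcases Relation.ReflTransGen.cases_head hp with h | ⟨c, ⟨_, hc, he⟩, _⟩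
      · exact hne h.symm
      · exact ih c (Set.mem_univ c) he hc
  ext v
  constructor
  · rintro ⟨hz, hx⟩
    rw [hZ] at hz
    exact (key v hz.1 hx).elim
  · intro h
    exact h.elim
end

section
/- Let P = (V, E, ⟨V₁, V_R⟩) be an MDP, let X be an end-component of P, let v ∈ X, and let P' be the MDP obtained from P by collapsing X to v. Then for every set D ⊆ V \ X: D is an end-component of P if and only if D is an end-component of P'. -/
/-- The edge relation of the MDP obtained by collapsing the set `X` to the vertex `v`:
edges of `E` avoiding `X`, plus an edge `(a, v)` for every `a ∉ X` with an `E`-edge into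
`X`, plus an edge `(v, b)` for every `b ∉ X` with an `E`-edge from `X` into it. -/
def collapseE {V : Type*} (E : V → V → Prop) (X : Set V) (v : V) : V → V → Prop :=
  fun a b =>
    (a ∉ X ∧ b ∉ X ∧ E a b) ∨
    (a ∉ X ∧ b = v ∧ ∃ x ∈ X, E a x) ∨
    (a = v ∧ b ∉ X ∧ ∃ x ∈ X, E x b)

/-- Collapsing an EC `X` to `v ∈ X` preserves the end-components disjoint from `X`:
for `D ⊆ V \ X`, `D` is an EC of the original MDP iff `D` is an EC of the collapsed MDP. -/
theorem collapse_EC_iff_of_disjoint {V : Type*} [Fintype V]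
    (E : V → V → Prop) (VR : Set V) (hNoSelf : ∀ v : V, ¬ E v v)
    (X : Set V) (hX : IsEC E VR X) (v : V) (hv : v ∈ X)
    (D : Set V) (hD : D ⊆ Xᶜ) :
    IsEC E VR D ↔ IsEC (collapseE E X v) (VR \ X) D := by
  have key : (fun a b => a ∈ D ∧ b ∈ D ∧ E a b)
      = (fun a b => a ∈ D ∧ b ∈ D ∧ collapseE E X v a b) := by
    funext a b
    apply propext
    constructor
    · rintro ⟨ha, hb, h⟩
      exact ⟨ha, hb, Or.inl ⟨hD ha, hD hb, h⟩⟩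
    · rintro ⟨ha, hb, h⟩
      refine ⟨ha, hb, ?_⟩
      rcases h with ⟨_, _, h⟩ | ⟨_, h, _⟩ | ⟨h, _, _⟩
      · exact h
      · exact absurd hv (h ▸ hD hb)
      · exact absurd hv (h ▸ hD ha)
  have hs : StronglyConnected E D ↔ StronglyConnected (collapseE E X v) D := by
    unfold StronglyConnected PathIn
    rw [key]
  unfold IsEC
  rw [hs]
  refine and_congr_right fun _ => ?_
  constructor
  · rintro h u ⟨hu, hr, _⟩ w hw
    rcases hw with ⟨_, _, e⟩ | ⟨_, _, x, hx, e⟩ | ⟨e, _, _⟩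
    · exact h u ⟨hu, hr⟩ w e
    · exact absurd hx (hD (h u ⟨hu, hr⟩ x e))
    · exact absurd hv (e ▸ hD hu)
  · rintro h u ⟨hu, hr⟩ w hw
    by_cases hwX : w ∈ X
    · exact absurd hv (hD (h u ⟨hu, hr, hD hu⟩ v (Or.inr (Or.inl ⟨hD hu, rfl, w, hwX, hw⟩))))
    · exact h u ⟨hu, hr, hD hu⟩ w (Or.inl ⟨hD hu, hwX, hw⟩)
end

section
/- Let P = (V, E, ⟨V₁, V_R⟩) be an MDP, let X be an end-component of P, let v ∈ X, and let P' be the MDP obtained from P by collapsing X to v. Then for every end-component D of P with D ∩ X ≠ ∅, the set (D \ X) ∪ {v} is an end-component of P'. -/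
/-- If `D` is an EC of the original MDP meeting the collapsed EC `X`, then
`(D \ X) ∪ {v}` is an EC of the MDP obtained by collapsing `X` to `v`. -/
theorem collapse_EC_of_meeting {V : Type*} [Fintype V]
    (E : V → V → Prop) (VR : Set V) (hNoSelf : ∀ v : V, ¬ E v v)
    (X : Set V) (hX : IsEC E VR X) (v : V) (hv : v ∈ X)
    (D : Set V) (hD : IsEC E VR D) (hDX : (D ∩ X).Nonempty) :
    IsEC (collapseE E X v) (VR \ X) ((D \ X) ∪ {v}) := by
  classical
  have key : ∀ a b, PathIn E D a b →
      PathIn (collapseE E X v) ((D \ X) ∪ {v})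
        (if a ∈ X then v else a) (if b ∈ X then v else b) := by
    intro a b h
    induction h with
    | refl => exact Relation.ReflTransGen.refl
    | tail hab hbc ih =>
      rename_i b c
      obtain ⟨hb, hc, hE⟩ := hbc
      by_cases hbX : b ∈ X <;> by_cases hcX : c ∈ X <;>
        simp only [hbX, hcX, if_true, if_false] at ih ⊢
      · exact ih
      · exact ih.tail ⟨Or.inr rfl, Or.inl ⟨hc, hcX⟩, Or.inr (Or.inr ⟨rfl, hcX, b, hbX, hE⟩)⟩
      · exact ih.tail ⟨Or.inl ⟨hb, hbX⟩, Or.inr rfl, Or.inr (Or.inl ⟨hbX, rfl, c, hcX, hE⟩)⟩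
      · exact ih.tail ⟨Or.inl ⟨hb, hbX⟩, Or.inl ⟨hc, hcX⟩, Or.inl ⟨hbX, hcX, hE⟩⟩
  obtain ⟨d, hdD, hdX⟩ := hDX
  have lift : ∀ u ∈ (D \ X) ∪ {v}, ∃ a ∈ D, (if a ∈ X then v else a) = u := by
    rintro u (⟨hu, huX⟩ | hu)
    · exact ⟨u, hu, if_neg huX⟩
    · exact ⟨d, hdD, by rw [if_pos hdX]; exact hu.symm⟩
  refine ⟨?_, ?_⟩
  · intro u hu w hw
    obtain ⟨a, ha, rfl⟩ := lift u hu
    obtain ⟨b, hb, rfl⟩ := lift w hw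
    exact key a b (hD.1 a ha b hb)
  · rintro u ⟨hu, huR, huX⟩ w hE
    have huD : u ∈ D := by
      rcases hu with hu | hu
      · exact hu.1
      · exact absurd (by rw [Set.mem_singleton_iff.1 hu]; exact hv) huX
    rcases hE with ⟨_, hwX, hE⟩ | ⟨_, hw, _⟩ | ⟨hu', _⟩
    · exact Or.inl ⟨hD.2 u ⟨huD, huR⟩ w hE, hwX⟩
    · exact Or.inr hw
    · exact absurd (by rw [hu']; exact hv) huX
end

section
/- Let P = (V, E, ⟨V₁, V_R⟩) be an MDP, let X be an end-component of P, let v ∈ X, and let P' be the MDP obtained from P by collapsing X to v. Then for every end-component D of P' with v ∈ D, the set D ∪ X is an end-component of P. -/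
/-- If `D` is an EC of the MDP obtained by collapsing the EC `X` to `v`, and `v ∈ D`,
then `D ∪ X` is an EC of the original MDP. -/
theorem uncollapse_EC {V : Type*} [Fintype V]
    (E : V → V → Prop) (VR : Set V) (hNoSelf : ∀ v : V, ¬ E v v)
    (X : Set V) (hX : IsEC E VR X) (v : V) (hv : v ∈ X)
    (D : Set V) (hD : IsEC (collapseE E X v) (VR \ X) D) (hvD : v ∈ D) :
    IsEC E VR (D ∪ X) := by
  have hXp : ∀ u ∈ X, ∀ w ∈ X, PathIn E (D ∪ X) u w := by
    intro u hu w hw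
    have h := hX.1 u hu w hw
    clear hw
    induction h with
    | refl => exact Relation.ReflTransGen.refl
    | tail _ h ih => exact Relation.ReflTransGen.tail ih ⟨Or.inr h.1, Or.inr h.2.1, h.2.2⟩
  have hDp : ∀ u w, PathIn (collapseE E X v) D u w → PathIn E (D ∪ X) u w := by
    intro u w h
    induction h with
    | refl => exact Relation.ReflTransGen.refl
    | tail _ hbc ih =>
      obtain ⟨hb, hc, h | ⟨_, rfl, x, hx, hE⟩ | ⟨rfl, _, x, hx, hE⟩⟩ := hbc
      · exact Relation.ReflTransGen.tail ih ⟨Or.inl hb, Or.inl hc, h.2.2⟩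
      · exact Relation.ReflTransGen.trans
          (Relation.ReflTransGen.tail ih ⟨Or.inl hb, Or.inr hx, hE⟩) (hXp x hx _ hv)
      · exact Relation.ReflTransGen.tail (Relation.ReflTransGen.trans ih (hXp _ hv x hx))
          ⟨Or.inr hx, Or.inl hc, hE⟩
  have hto : ∀ u ∈ D ∪ X, PathIn E (D ∪ X) u v := by
    rintro u (hu | hu)
    · exact hDp _ _ (hD.1 u hu v hvD)
    · exact hXp u hu v hv
  have hfrom : ∀ u ∈ D ∪ X, PathIn E (D ∪ X) v u := by
    rintro u (hu | hu)
    · exact hDp _ _ (hD.1 v hvD u hu)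
    · exact hXp v hv u hu
  refine ⟨fun u hu w hw => Relation.ReflTransGen.trans (hto u hu) (hfrom w hw), ?_⟩
  rintro u ⟨hu, hR⟩ w hE
  by_cases huX : u ∈ X
  · exact Or.inr (hX.2 u ⟨huX, hR⟩ w hE)
  by_cases hwX : w ∈ X
  · exact Or.inr hwX
  · exact Or.inl (hD.2 u ⟨hu.resolve_right huX, hR, huX⟩ w (Or.inl ⟨huX, hwX, hE⟩))
end

section
/- Let P = (V, E, ⟨V₁, V_R⟩) be an MDP, let S ⊆ V, let T ⊆ S, and let A = Attr_R^{P[S]}(T) be the random attractor of T computed in the sub-MDP P[S]. If Q ⊆ S is a nontrivial end-component of P[S] with Q ∩ A ≠ ∅, then Q ∩ T ≠ ∅. -/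
/-- Let `A` be the random attractor of `T ⊆ S` computed in the sub-MDP induced by `S`.
If `Q ⊆ S` is a nontrivial end-component of the sub-MDP meeting `A`, then `Q` meets `T`. -/
theorem EC_meeting_attractor_meets_target {V : Type*} [Fintype V]
    (E : V → V → Prop) (VR : Set V) (hNoSelf : ∀ v : V, ¬ E v v)
    (S T : Set V) (hTS : T ⊆ S)
    (A : Set V) (hA : A = {v | AttrR S E VR T v})
    (Q : Set V) (hQS : Q ⊆ S)
    (hQ : IsNontrivialEC (fun a b => a ∈ S ∧ b ∈ S ∧ E a b) (VR ∩ S) Q)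
    (hQA : (Q ∩ A).Nonempty) :
    (Q ∩ T).Nonempty := by
  obtain ⟨⟨hSC, hcl⟩, hcard⟩ := hQ
  obtain ⟨v, hvQ, hvA⟩ := hQA
  rw [hA] at hvA
  have hv : AttrR S E VR T v := hvA
  clear hvA
  induction hv with
  | base h => exact ⟨_, hvQ, h⟩
  | rand hS hR hwS hE _ ih => exact ih (hcl _ ⟨hvQ, hR, hS⟩ _ ⟨hS, hwS, hE⟩)
  | @play v hS hR _ ih =>
    obtain ⟨u, huQ, huv⟩ := Set.exists_ne_of_one_lt_ncard (by omega : 1 < Q.ncard) v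
    rcases Relation.ReflTransGen.cases_head (hSC v hvQ u huQ) with h | ⟨c, ⟨_, hcQ, _, hcS, hE⟩, _⟩
    · exact absurd h.symm huv
    · exact ih c hcS hE hcQ
end

section
/- Let P = (V, E, ⟨V₁, V_R⟩) be an MDP, let S' ⊆ V, let U = { v ∈ S' ∩ V_R : Out(v) ∩ (V \ S') ≠ ∅ }, and let Z = Attr_R^{P[S']}(U) be the random attractor of U in the sub-MDP P[S']. Let C be a strongly connected component of the subgraph induced by S' \ Z such that no edge of E goes from a vertex of C to a vertex of (S' \ Z) \ C, and |C| ≥ 2. Then C is a nontrivial end-component of P. -/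
/-- `C` is a strongly connected component of the subgraph induced by `W`:
a maximal strongly connected subset of `W`. -/
def IsSCCOf {V : Type*} (E : V → V → Prop) (W C : Set V) : Prop :=
  C ⊆ W ∧ StronglyConnected E C ∧
    ∀ C', C' ⊆ W → StronglyConnected E C' → C ⊆ C' → C' = C

/-- Let `U` be the random vertices of `S'` with an edge leaving `S'`, and `Z` the
random attractor of `U` in the sub-MDP induced by `S'`.  Every bottom SCC `C` of the
subgraph induced by `S' \ Z` (no edge from `C` to the rest of `S' \ Z`) with at least
two vertices is a nontrivial end-component of the MDP. -/
theorem bottom_SCC_is_nontrivial_EC {V : Type*} [Fintype V]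
    (E : V → V → Prop) (VR : Set V) (hNoSelf : ∀ v : V, ¬ E v v)
    (hOut : ∀ v : V, ∃ w, E v w)
    (S' : Set V)
    (U : Set V) (hU : U = {v | v ∈ S' ∩ VR ∧ ∃ w, E v w ∧ w ∉ S'})
    (Z : Set V) (hZ : Z = {v | AttrR S' E VR U v})
    (C : Set V) (hC : IsSCCOf E (S' \ Z) C)
    (hbot : ∀ a ∈ C, ∀ b ∈ (S' \ Z) \ C, ¬ E a b)
    (hcard : 2 ≤ C.ncard) :
    IsNontrivialEC E VR C := by
  subst hU hZ
  refine ⟨⟨hC.2.1, ?_⟩, hcard⟩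
  rintro u ⟨huC, huR⟩ w hw
  obtain ⟨huS, huZ⟩ := hC.1 huC
  have hwS : w ∈ S' := by
    by_contra h
    exact huZ (AttrR.base ⟨⟨huS, huR⟩, w, hw, h⟩)
  by_contra hwC
  exact hbot u huC w ⟨⟨hwS, fun hwZ => huZ (AttrR.rand huS huR hwS hw hwZ)⟩, hwC⟩ hw
end

section
/- Let P = (V, E, ⟨V₁, V_R⟩) be an MDP, let X ⊆ V, let A = Attr_R^P(X) be the random attractor of X in P, and let W = V \ A. Then every end-component of the sub-MDP P[W] is an end-component of P. -/
/-- Let `A` be the random attractor of `X` in the MDP and `W = V \ A`.  Then every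
end-component of the sub-MDP induced by `W` is an end-component of the MDP. -/
theorem EC_of_subMDP_after_attractor_removal {V : Type*} [Fintype V]
    (E : V → V → Prop) (VR : Set V) (hNoSelf : ∀ v : V, ¬ E v v)
    (X : Set V)
    (A : Set V) (hA : A = {v | AttrR Set.univ E VR X v})
    (W : Set V) (hW : W = Aᶜ)
    (U : Set V) (hUW : U ⊆ W)
    (hU : IsEC (fun a b => a ∈ W ∧ b ∈ W ∧ E a b) (VR ∩ W) U) :
    IsEC E VR U := by
  obtain ⟨hsc, hcl⟩ := hU
  refine ⟨fun u hu w hw => ?_, ?_⟩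
  · exact Relation.ReflTransGen.mono (fun a b h => ⟨h.1, h.2.1, h.2.2.2.2⟩) _ _ (hsc u hu w hw)
  · rintro u ⟨hu, hr⟩ w he
    have huW := hUW hu
    have hwW : w ∈ W := by
      subst hW hA
      intro hw
      exact huW (AttrR.rand (Set.mem_univ _) hr (Set.mem_univ _) he hw)
    exact hcl u ⟨hu, hr, huW⟩ w ⟨huW, hwW, he⟩
end

section
/- Let P = (V, E, ⟨V₁, V_R⟩) be an MDP, let X ⊆ V, let A = Attr_R^P(X) be the random attractor of X in P, and let W = V \ A. Then every maximal end-component of the sub-MDP P[W] is contained in a maximal end-component of P. In particular, if two vertices u and w lie in the same maximal end-component of P[W], then they lie in the same maximal end-component of P. -/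
/-- Let `A` be the random attractor of `X` in the MDP and `W = V \ A`.  Then every
maximal end-component of the sub-MDP induced by `W` is contained in some maximal
end-component of the MDP; in particular, vertices lying in a common MEC of the
sub-MDP lie in a common MEC of the MDP. -/
theorem MEC_of_subMDP_contained_in_MEC {V : Type*} [Fintype V]
    (E : V → V → Prop) (VR : Set V) (hNoSelf : ∀ v : V, ¬ E v v)
    (X : Set V)
    (A : Set V) (hA : A = {v | AttrR Set.univ E VR X v})
    (W : Set V) (hW : W = Aᶜ)
    (U : Set V) (hUW : U ⊆ W)
    (hU : IsMEC (fun a b => a ∈ W ∧ b ∈ W ∧ E a b) (VR ∩ W) U) :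
    ∃ M : Set V, IsMEC E VR M ∧ U ⊆ M := by
  have hEC : IsNontrivialEC E VR U := by
    obtain ⟨⟨⟨hsc, hcl⟩, hcard⟩, -⟩ := hU
    refine ⟨⟨?_, ?_⟩, hcard⟩
    · intro u hu w hw
      exact Relation.ReflTransGen.mono (fun a b h => ⟨h.1, h.2.1, h.2.2.2.2⟩) _ _ (hsc u hu w hw)
    · intro u hu w huw
      have huW : u ∈ W := hUW hu.1
      have hwW : w ∈ W := by
        subst hW hA
        intro hw
        exact huW (AttrR.rand (Set.mem_univ _) hu.2 (Set.mem_univ _) huw hw)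
      exact hcl u ⟨hu.1, hu.2, huW⟩ w ⟨huW, hwW, huw⟩
  obtain ⟨M, hUM, hM⟩ :=
    Set.Finite.exists_le_maximal (Set.toFinite {S : Set V | IsNontrivialEC E VR S}) hEC
  exact ⟨M, ⟨hM.prop, fun S hS hMS => Set.Subset.antisymm (hM.le_of_ge hS hMS) hMS⟩, hUM⟩
end

section
/- Let G = (V, E) be a finite directed graph, let X ⊆ V be a strongly connected set with |X| = k ≥ 2, let r ∈ X, and let γ be a positive integer such that q = ⌊γ / (2·log₂ k)⌋ ≥ 1. If there exists a vertex v ∈ X whose distance from r within the subgraph induced by X is at least γ, then there exists a nonempty set T ⊆ X such that every strongly connected component of the subgraph induced by X \ T has at most k − q·|T| vertices (i.e., T is a q-separator of X). -/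
/-- `reachIn E n a b`: there is a directed path of exactly `n` edges from `a` to `b`. -/
def reachIn {V : Type*} (E : V → V → Prop) : ℕ → V → V → Prop
  | 0, a, b => a = b
  | n + 1, a, c => ∃ b, E a b ∧ reachIn E n b c

theorem reachIn_snoc {V : Type*} (R : V → V → Prop) (n : ℕ) : ∀ a b c : V,
    reachIn R n a b → R b c → reachIn R (n + 1) a c := by
  induction n with
  | zero =>
    intro a b c h hbc
    have h' : a = b := h
    subst h'
    exact ⟨c, hbc, rfl⟩
  | succ n ih =>
    rintro a b c ⟨d, had, hdb⟩ hbc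
    exact ⟨d, had, ih d b c hdb hbc⟩

/-- A nonempty forward-closed part of a strongly connected set is everything. -/
theorem sc_closed {V : Type*} (E : V → V → Prop) (C S : Set V)
    (hC : StronglyConnected E C) (c : V) (hc : c ∈ C) (hcS : c ∈ S)
    (hcl : ∀ x ∈ C, x ∈ S → ∀ y ∈ C, E x y → y ∈ S) : C ⊆ S := by
  intro y hy
  have hp := hC c hc y hy
  unfold PathIn at hp
  induction hp with
  | refl => exact hcS
  | tail _ hbc ih => exact hcl _ hbc.1 (ih hbc.1) _ hbc.2.1 hbc.2.2

theorem log_step (q : ℕ) (hq : 1 ≤ q) (x y : ℝ) (hy : 0 < y) (hx : 0 < x)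
    (h : x < q * (x - y)) : Real.log y + 1 / q ≤ Real.log x := by
  have hq0 : (0 : ℝ) < q := by exact_mod_cast hq
  have h1 : y ≤ x * (1 - 1 / q) := by
    have : x * (1 - 1 / q) - y = (q * (x - y) - x) / q := by field_simp; ring
    have h2 : 0 ≤ (q * (x - y) - x) / (q : ℝ) := div_nonneg (by linarith) hq0.le
    linarith
  have h3 : 1 - 1 / (q : ℝ) ≤ Real.exp (-(1 / q)) := by
    have := Real.add_one_le_exp (-(1 / (q : ℝ)))
    linarith
  have h4 : y ≤ x * Real.exp (-(1 / q)) :=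
    h1.trans (mul_le_mul_of_nonneg_left h3 hx.le)
  have h5 := Real.log_le_log hy h4
  rw [Real.log_mul hx.ne' (Real.exp_pos _).ne', Real.log_exp] at h5
  linarith

/-- The numerical core of the argument. -/
theorem numeric_core (a : ℕ → ℕ) (k γ q : ℕ) (hk2 : 2 ≤ k) (ha0 : 1 ≤ a 0)
    (hmono : ∀ i, a i ≤ a (i + 1)) (hlt : ∀ i, i < γ → a i < k)
    (hq : q = ⌊(γ : ℝ) / (2 * Real.logb 2 (k : ℝ))⌋₊) (hq1 : 1 ≤ q) :
    ∃ i, i + 1 < γ ∧ (q : ℤ) * (a (i + 1) - a i) ≤ a (i + 1) ∧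
      (q : ℤ) * (a (i + 1) - a i) ≤ k - a i := by
  have hl2 := Real.log_two_gt_d9
  have hl2' := Real.log_two_lt_d9
  have hkR : (2 : ℝ) ≤ k := by exact_mod_cast hk2
  have hlogk : Real.log 2 ≤ Real.log k := Real.log_le_log (by norm_num) hkR
  have hlogb : Real.logb 2 (k : ℝ) * Real.log 2 = Real.log k := by
    rw [Real.logb]; field_simp
  have hlogb1 : 1 ≤ Real.logb 2 (k : ℝ) := by
    by_contra hcon
    push Not at hcon
    nlinarith
  have hq1R : (1 : ℝ) ≤ q := by exact_mod_cast hq1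
  have hγ : 2 * q * Real.logb 2 (k : ℝ) ≤ γ := by
    have h1 : (q : ℝ) ≤ (γ : ℝ) / (2 * Real.logb 2 (k : ℝ)) := by
      rw [hq]; exact Nat.floor_le (by positivity)
    rw [le_div_iff₀ (by positivity)] at h1
    linarith
  have hγ2 : 2 * (q : ℝ) ≤ γ := by nlinarith
  have hγ2N : 2 * q ≤ γ := by exact_mod_cast hγ2
  by_contra hcon
  push Not at hcon
  have hq2 : 2 ≤ q := by
    by_contra h
    have : q = 1 := by omega
    subst this
    have h1 := hlt 1 (by omega)
    have := hcon 0 (by omega) (by push_cast; omega)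
    push_cast at this
    have h0 := hmono 0
    omega
  have hapos : ∀ i, 1 ≤ a i := by
    intro i
    induction i with
    | zero => exact ha0
    | succ n ih => exact ih.trans (hmono n)
  have key : ∀ i, i < γ →
      -Real.log k + (i : ℝ) / q ≤ Real.log (a i) - Real.log ((k : ℝ) - a i) := by
    intro i
    induction i with
    | zero =>
      intro h0
      have h1 : (1 : ℝ) ≤ a 0 := by exact_mod_cast ha0
      have h2 : (a 0 : ℝ) < k := by exact_mod_cast hlt 0 h0
      have h3 := Real.log_nonneg h1
      have h4 : Real.log ((k : ℝ) - a 0) ≤ Real.log k :=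
        Real.log_le_log (by linarith) (by linarith)
      simp
      linarith
    | succ n ih =>
      intro hn
      have ih' := ih (by omega)
      have p0 : (1 : ℝ) ≤ a n := by exact_mod_cast hapos n
      have p1 : (a n : ℝ) ≤ a (n + 1) := by exact_mod_cast hmono n
      have p2 : (a (n + 1) : ℝ) < k := by exact_mod_cast hlt _ hn
      have m1 : Real.log (a n) ≤ Real.log (a (n + 1)) := Real.log_le_log (by linarith) p1
      have m2 : Real.log ((k : ℝ) - a (n + 1)) ≤ Real.log ((k : ℝ) - a n) :=
        Real.log_le_log (by linarith) (by linarith)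
      have e : ((n + 1 : ℕ) : ℝ) / q = (n : ℝ) / q + 1 / q := by
        push_cast; ring
      rw [e]
      by_cases hc : (q : ℤ) * (a (n + 1) - a n) ≤ a (n + 1)
      · have h := hcon n hn hc
        have hR : (k : ℝ) - a n < q * (a (n + 1) - a n) := by exact_mod_cast h
        have := log_step q hq1 ((k : ℝ) - a n) ((k : ℝ) - a (n + 1)) (by linarith)
          (by linarith) (by linarith)
        linarith
      · push Not at hc
        have hR : (a (n + 1) : ℝ) < q * (a (n + 1) - a n) := by exact_mod_cast hc
        have := log_step q hq1 (a (n + 1) : ℝ) (a n) (by linarith) (by linarith) hR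
        linarith
  have hlast := key (γ - 1) (by omega)
  have hl : (a (γ - 1)) + 1 ≤ k := hlt (γ - 1) (by omega)
  have hlR : (a (γ - 1) : ℝ) + 1 ≤ k := by exact_mod_cast hl
  have hp : (1 : ℝ) ≤ a (γ - 1) := by exact_mod_cast hapos _
  have u1 : Real.log (a (γ - 1)) ≤ Real.log k := Real.log_le_log (by linarith) (by linarith)
  have u2 : 0 ≤ Real.log ((k : ℝ) - a (γ - 1)) := Real.log_nonneg (by linarith)
  have e : ((γ - 1 : ℕ) : ℝ) = γ - 1 := by
    rw [Nat.cast_sub (by omega)]; simp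
  rw [e] at hlast
  have f : ((γ : ℝ) - 1) / q ≤ 2 * Real.log k := by linarith
  rw [div_le_iff₀ (by linarith)] at f
  have g : 2 * Real.log k * q ≤ γ * Real.log 2 := by
    rw [← hlogb]
    have := mul_le_mul_of_nonneg_right hγ (by linarith : 0 ≤ Real.log 2)
    linarith
  have h4 : (4 : ℝ) ≤ γ := by
    have : 4 ≤ γ := by omega
    exact_mod_cast this
  nlinarith

/-- Let `X` be a strongly connected set with `|X| = k ≥ 2`, `r ∈ X`, and `γ ≥ 1` with
`q = ⌊γ / (2 log₂ k)⌋ ≥ 1`.  If some `v ∈ X` has distance at least `γ` from `r` within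
the subgraph induced by `X`, then `X` has a `q`-separator: a nonempty `T ⊆ X` such that
every SCC of the subgraph induced by `X \ T` has at most `k - q * |T|` vertices. -/
theorem separator_exists {V : Type*} [Fintype V]
    (E : V → V → Prop)
    (X : Set V) (hX : StronglyConnected E X)
    (k : ℕ) (hk : X.ncard = k) (hk2 : 2 ≤ k)
    (r : V) (hr : r ∈ X)
    (γ : ℕ) (hγ : 1 ≤ γ)
    (q : ℕ) (hq : q = ⌊(γ : ℝ) / (2 * Real.logb 2 (k : ℝ))⌋₊) (hq1 : 1 ≤ q)
    (hfar : ∃ v ∈ X, ∀ n : ℕ,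
      reachIn (fun a b => a ∈ X ∧ b ∈ X ∧ E a b) n r v → γ ≤ n) :
    ∃ T : Set V, T ⊆ X ∧ T.Nonempty ∧
      ∀ C : Set V, IsSCCOf E (X \ T) C →
        (C.ncard : ℤ) ≤ (k : ℤ) - (q : ℤ) * T.ncard := by
  classical
  obtain ⟨v, hv, hfar⟩ := hfar
  set R : V → V → Prop := fun a b => a ∈ X ∧ b ∈ X ∧ E a b with hR
  let B : ℕ → Set V := fun i => {x | x ∈ X ∧ ∃ n ≤ i, reachIn R n r x}
  have hBX : ∀ i, B i ⊆ X := fun i x hx => hx.1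
  have hBm : ∀ i, B i ⊆ B (i + 1) := by
    rintro i x ⟨hx, n, hn, h⟩
    exact ⟨hx, n, by omega, h⟩
  have hrB : ∀ i, r ∈ B i := fun i => ⟨hr, 0, by omega, rfl⟩
  have hvB : ∀ i, i < γ → v ∉ B i := by
    rintro i hi ⟨_, n, hn, h⟩
    have := hfar n h
    omega
  have hstep : ∀ i x y, x ∈ B i → y ∈ X → E x y → y ∈ B (i + 1) := by
    rintro i x y ⟨hx, n, hn, h⟩ hy hxy
    exact ⟨hy, n + 1, by omega, reachIn_snoc R n r x y h ⟨hx, hy, hxy⟩⟩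
  obtain ⟨i, hi, h1, h2⟩ := numeric_core (fun i => (B i).ncard) k γ q hk2
    ((Set.ncard_pos (Set.toFinite _)).2 ⟨r, hrB 0⟩)
    (fun i => Set.ncard_le_ncard (hBm i) (Set.toFinite _))
    (fun i hi => by
      rw [← hk]
      exact Set.ncard_lt_ncard
        (Set.ssubset_iff_subset_ne.2 ⟨hBX i, fun h => hvB i hi (h ▸ hv)⟩) (Set.toFinite _))
    hq hq1
  have hTc : (B (i + 1) \ B i).ncard + (B i).ncard = (B (i + 1)).ncard :=
    Set.ncard_sdiff_add_ncard_of_subset (hBm i) (Set.toFinite _)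
  have hTc' : ((B (i + 1)).ncard : ℤ) - (B i).ncard = (B (i + 1) \ B i).ncard := by omega
  simp only [hTc'] at h1 h2
  refine ⟨B (i + 1) \ B i, fun x hx => hBX _ hx.1, ?_, ?_⟩
  · by_contra hne
    rw [Set.not_nonempty_iff_eq_empty, Set.sdiff_eq_empty] at hne
    exact hvB i (by omega) (sc_closed E X (B i) hX r hr (hrB i)
      (fun x _ hxB y hy hxy => hne (hstep i x y hxB hy hxy)) hv)
  · rintro C ⟨hCs, hC, -⟩
    by_cases hm : ∃ c ∈ C, c ∈ B i
    · obtain ⟨c, hc, hcB⟩ := hm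
      have hsub : C ⊆ B i := sc_closed E C (B i) hC c hc hcB (by
        intro x _ hxB y hy hxy
        by_contra hyB
        exact (hCs hy).2 ⟨hstep i x y hxB (hCs hy).1 hxy, hyB⟩)
      have := Set.ncard_le_ncard hsub (Set.toFinite _)
      have h3 : (C.ncard : ℤ) ≤ (B i).ncard := by exact_mod_cast this
      linarith
    · have hsub : C ⊆ X \ B (i + 1) := by
        intro c hc
        refine ⟨(hCs hc).1, fun hcB => (hCs hc).2 ⟨hcB, fun h => hm ⟨c, hc, h⟩⟩⟩
      have := Set.ncard_le_ncard hsub (Set.toFinite _)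
      have h4 := Set.ncard_sdiff_add_ncard_of_subset (hBX (i + 1)) (Set.toFinite X)
      have h3 : (C.ncard : ℤ) + (B (i + 1)).ncard ≤ k := by
        rw [← hk]; exact_mod_cast (by omega)
      linarith
end
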